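/- arXiv:1907.07528 — 5 statements merged into one kernel-verified Lean document; each statement's English description precedes it below -/
import Mathlib

section
/- In a finite-player game in normal form with bounded payoffs and a fixed cooperative profile u* maximizing the total payoff, the ζ-characteristic function is superadditive: for any two disjoint coalitions S, Q ⊆ ι, V^ζ(S ∪ Q) ≥ V^ζ(S) + V^ζ(Q). -/
/-!
Against any play `c` of the players outside `S ∪ Q`, the joint profile agrees with `ustar` on `S`
and on `Q`. The payoff of `S ∪ Q` splits as the payoff of `S` plus that of `Q`, and each part is
bounded below by the corresponding ζ-value (`Vzeta_le_of_agree`), since the profile is one of those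
over which that ζ-value is an infimum. Taking the infimum over `c` gives superadditivity.
-/

open scoped BigOperators

/-- Combine a tuple of controls for the coalition `S` with a tuple of controls for the
complementary coalition into a full strategy profile. -/
def glue {ι : Type*} [DecidableEq ι] {U : ι → Type*} (S : Finset ι)
    (a : ∀ i : {i // i ∈ S}, U i) (c : ∀ i : {i // i ∉ S}, U i) : ∀ i, U i :=
  fun i => if h : i ∈ S then a ⟨i, h⟩ else c ⟨i, h⟩

/-- The α-characteristic function (lower max-min value). -/
noncomputable def Valpha {ι : Type*} [DecidableEq ι] [Fintype ι] {U : ι → Type*}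
    [∀ i, Nonempty (U i)] (J : ι → (∀ i, U i) → ℝ) (S : Finset ι) : ℝ :=
  ⨆ a : ∀ i : {i // i ∈ S}, U i, ⨅ c : ∀ i : {i // i ∉ S}, U i,
    ∑ k ∈ S, J k (glue S a c)

/-- The β-characteristic function (upper min-max value). -/
noncomputable def Vbeta {ι : Type*} [DecidableEq ι] [Fintype ι] {U : ι → Type*}
    [∀ i, Nonempty (U i)] (J : ι → (∀ i, U i) → ℝ) (S : Finset ι) : ℝ :=
  ⨅ c : ∀ i : {i // i ∉ S}, U i, ⨆ a : ∀ i : {i // i ∈ S}, U i,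
    ∑ k ∈ S, J k (glue S a c)

/-- The δ-characteristic function: coalition `S` maximizes while the complement sticks
to the Nash equilibrium profile `ubar`. -/
noncomputable def Vdelta {ι : Type*} [DecidableEq ι] [Fintype ι] {U : ι → Type*}
    [∀ i, Nonempty (U i)] (J : ι → (∀ i, U i) → ℝ) (ubar : ∀ i, U i) (S : Finset ι) : ℝ :=
  ⨆ a : ∀ i : {i // i ∈ S}, U i,
    ∑ k ∈ S, J k (glue S a (fun i : {i // i ∉ S} => ubar i))

/-- The ζ-characteristic function: coalition `S` sticks to the cooperative profile `ustar`
while the complement minimizes the total payoff of `S`. -/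
noncomputable def Vzeta {ι : Type*} [DecidableEq ι] [Fintype ι] {U : ι → Type*}
    [∀ i, Nonempty (U i)] (J : ι → (∀ i, U i) → ℝ) (ustar : ∀ i, U i) (S : Finset ι) : ℝ :=
  ⨅ c : ∀ i : {i // i ∉ S}, U i,
    ∑ k ∈ S, J k (glue S (fun i : {i // i ∈ S} => ustar i) c)

/-- The η-characteristic function: coalition `S` uses the cooperative profile `ustar`
and the complement uses the Nash equilibrium profile `ubar`. -/
noncomputable def Veta {ι : Type*} [DecidableEq ι] [Fintype ι] {U : ι → Type*}
    [∀ i, Nonempty (U i)] (J : ι → (∀ i, U i) → ℝ) (ustar ubar : ∀ i, U i)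
    (S : Finset ι) : ℝ :=
  ∑ k ∈ S, J k (glue S (fun i : {i // i ∈ S} => ustar i) (fun i : {i // i ∉ S} => ubar i))

/-- Any profile that agrees with `ustar` on `S` is one of the competitors in the infimum defining
the ζ-value of `S`; boundedness of the payoffs makes that real infimum a genuine lower bound. -/
lemma Vzeta_le_of_agree {ι : Type*} [DecidableEq ι] [Fintype ι]
    {U : ι → Type*} [∀ i, Nonempty (U i)] (J : ι → (∀ i, U i) → ℝ)
    (M : ℝ) (hM : ∀ (i : ι) (u : ∀ i, U i), |J i u| ≤ M)
    (ustar : ∀ i, U i) (S : Finset ι) (u : ∀ i, U i) (hu : ∀ i ∈ S, u i = ustar i) :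
    Vzeta J ustar S ≤ ∑ k ∈ S, J k u := by
  have hglue : glue S (fun i : {i // i ∈ S} => ustar i) (fun i : {i // i ∉ S} => u i) = u := by
    funext i
    by_cases h : i ∈ S
    · simp [glue, h, hu i h]
    · simp [glue, h]
  have hbdd : BddBelow (Set.range fun c : ∀ i : {i // i ∉ S}, U i =>
      ∑ k ∈ S, J k (glue S (fun i : {i // i ∈ S} => ustar i) c)) := by
    refine ⟨∑ _k ∈ S, -M, ?_⟩
    rintro _ ⟨c, rfl⟩
    exact Finset.sum_le_sum fun k _ => (abs_le.mp (hM k _)).1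
  have h := ciInf_le hbdd (fun i : {i // i ∉ S} => u i)
  simp only [hglue] at h
  exact h

/-- The ζ-characteristic function is superadditive. -/
theorem Vzeta_superadditive {ι : Type*} [DecidableEq ι] [Fintype ι] [Nonempty ι]
    {U : ι → Type*} [∀ i, Nonempty (U i)]
    (J : ι → (∀ i, U i) → ℝ)
    (M : ℝ) (hM : ∀ (i : ι) (u : ∀ i, U i), |J i u| ≤ M)
    (ustar : ∀ i, U i) (hstar : ∀ u : ∀ i, U i, ∑ i, J i u ≤ ∑ i, J i ustar)
    (S Q : Finset ι) (hSQ : Disjoint S Q) :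
    Vzeta J ustar S + Vzeta J ustar Q ≤ Vzeta J ustar (S ∪ Q) := by
  refine le_ciInf fun c => ?_
  rw [Finset.sum_union hSQ]
  refine add_le_add (Vzeta_le_of_agree J M hM ustar S _ ?_)
    (Vzeta_le_of_agree J M hM ustar Q _ ?_)
  · intro i hi
    simp [glue, hi]
  · intro i hi
    simp [glue, hi]
end

section
/- In a finite-player game in normal form with bounded payoffs and a fixed cooperative profile u* maximizing the total payoff, for every coalition S ⊆ ι one has V^β(S) ≥ V^ζ(S). -/
open scoped BigOperators

/-- The β-characteristic function dominates the ζ-characteristic function. -/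
theorem Vbeta_ge_Vzeta {ι : Type*} [DecidableEq ι] [Fintype ι] [Nonempty ι]
    {U : ι → Type*} [∀ i, Nonempty (U i)]
    (J : ι → (∀ i, U i) → ℝ)
    (M : ℝ) (hM : ∀ (i : ι) (u : ∀ i, U i), |J i u| ≤ M)
    (ustar : ∀ i, U i) (hstar : ∀ u : ∀ i, U i, ∑ i, J i u ≤ ∑ i, J i ustar)
    (S : Finset ι) :
    Vzeta J ustar S ≤ Vbeta J S := by
  -- Against each fixed `c`, playing `ustar` on `S` is one of the replies in the supremum.
  -- Boundedness of the payoffs keeps the real infimum and supremum from being junk values.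
  refine ciInf_mono ⟨∑ _k ∈ S, -M, ?_⟩ fun c => ?_
  · rintro _ ⟨c, rfl⟩
    exact Finset.sum_le_sum fun k _ => (abs_le.mp (hM k _)).1
  · refine le_ciSup (f := fun a : ∀ i : {i // i ∈ S}, U i => ∑ k ∈ S, J k (glue S a c))
      ⟨∑ _k ∈ S, M, ?_⟩ (fun i : {i // i ∈ S} => ustar i)
    rintro _ ⟨a, rfl⟩
    exact Finset.sum_le_sum fun k _ => (abs_le.mp (hM k _)).2
end

section
/- In the pollution control game, the open-loop profile ū with ū i (t) = b i − d i·(T − t) is a Nash equilibrium: for every player i and every measurable function v : ℝ → ℝ with v(s) ∈ [0, b i] for a.e. s ∈ [t0, T], the payoff of player i at the profile obtained from ū by replacing its i-th component with v is at most J i (ū). -/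
/-!
Let player `i` deviate from `ū i` to `v` and put `h = v - ū i`. The state changes by
`H t = ∫ s in t0..t, h s`, and since `b i - ū i t = d i * (T - t)`, completing the square shows that
the running payoff changes by `d i * ((T - t) * h t - H t) - (1/2) * (h t)^2`. By integration by
parts (`integral_primitive_eq`) the first term integrates to zero, so the deviation changes the
payoff by `-(1/2) * ∫ h^2 ≤ 0`.
-/

open scoped BigOperators
open MeasureTheory intervalIntegral

/-- A control for player `i` is admissible if it is measurable and takes values in
`[0, b i]` almost everywhere on `[t0, T]`. -/
def Admissible (bi t0 T : ℝ) (ui : ℝ → ℝ) : Prop :=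
  Measurable ui ∧ ∀ᵐ s ∂(volume.restrict (Set.Icc t0 T)), ui s ∈ Set.Icc 0 bi

/-- The state (total pollution stock) generated by the profile `u` of controls. -/
noncomputable def state {n : ℕ} (x0 t0 : ℝ) (u : Fin n → ℝ → ℝ) (t : ℝ) : ℝ :=
  x0 + ∫ s in t0..t, ∑ j, u j s

/-- The payoff of player `i` in the pollution control game. -/
noncomputable def payoff {n : ℕ} (b d : Fin n → ℝ) (x0 t0 T : ℝ)
    (i : Fin n) (u : Fin n → ℝ → ℝ) : ℝ :=
  ∫ t in t0..T, (b i * u i t - (1/2) * (u i t)^2 - d i * state x0 t0 u t)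

/-- Integration by parts for the primitive of a merely integrable function, obtained from the
absolute continuity of that primitive. -/
lemma integral_primitive_eq {h : ℝ → ℝ} {a c : ℝ} (hh : IntervalIntegrable h volume a c) :
    ∫ t in a..c, (∫ s in a..t, h s) = ∫ t in a..c, (c - t) * h t := by
  have hH := hh.absolutelyContinuousOnInterval_intervalIntegral (c := a) (by simp)
  have hl : AbsolutelyContinuousOnInterval (fun t : ℝ => c - t) a c :=
    ContDiffOn.absolutelyContinuousOnInterval (by fun_prop)
  have key := hl.integral_mul_deriv_eq_deriv_mul hH
  have hderiv : ∫ t in a..c, (c - t) * deriv (fun x => ∫ v in a..x, h v) t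
      = ∫ t in a..c, (c - t) * h t := by
    apply intervalIntegral.integral_congr_ae
    filter_upwards [hh.ae_hasDerivAt_integral] with t ht hmem
    rw [(ht (Set.uIoc_subset_uIcc hmem) a (by simp)).deriv]
  rw [hderiv] at key
  rw [key]
  simp

/-- An admissible control is essentially bounded, so both it and its square, which enters the
payoff, are integrable. -/
lemma Admissible.intervalIntegrable {bi t0 T : ℝ} {v : ℝ → ℝ} (htT : t0 ≤ T)
    (hv : Admissible bi t0 T v) :
    IntervalIntegrable v volume t0 T ∧ IntervalIntegrable (fun t => (v t)^2) volume t0 T := by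
  obtain ⟨hm, hb⟩ := hv
  have hb' : ∀ᵐ s ∂(volume.restrict (Set.Ioc t0 T)), v s ∈ Set.Icc 0 bi :=
    ae_restrict_of_ae_restrict_of_subset Set.Ioc_subset_Icc_self hb
  rw [intervalIntegrable_iff_integrableOn_Ioc_of_le htT,
    intervalIntegrable_iff_integrableOn_Ioc_of_le htT]
  constructor
  · refine Measure.integrableOn_of_bounded (M := bi) (by simp) hm.aestronglyMeasurable ?_
    filter_upwards [hb'] with s hs
    rw [Real.norm_eq_abs, abs_of_nonneg hs.1]
    exact hs.2
  · refine Measure.integrableOn_of_bounded (M := bi^2) (by simp)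
      (hm.pow_const 2).aestronglyMeasurable ?_
    filter_upwards [hb'] with s hs
    rw [Real.norm_eq_abs, abs_of_nonneg (sq_nonneg _)]
    exact pow_le_pow_left₀ hs.1 hs.2 2

/-- The open-loop profile `ū i (t) = b i − d i (T − t)` is a Nash equilibrium of the
pollution control game. -/
theorem pollution_nash_equilibrium (n : ℕ) (hn : 1 ≤ n) (b d : Fin n → ℝ)
    (hd : ∀ i, 0 < d i) (x0 t0 T : ℝ) (htT : t0 < T)
    (hreg : ∀ i, (∑ j, d j) * (T - t0) ≤ b i) :
    ∀ i : Fin n, ∀ v : ℝ → ℝ, Admissible (b i) t0 T v →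
      payoff b d x0 t0 T i
          (Function.update (fun j t => b j - d j * (T - t)) i v)
        ≤ payoff b d x0 t0 T i (fun j t => b j - d j * (T - t)) := by
  intro i v hv
  obtain ⟨hvi, hv2⟩ := hv.intervalIntegrable htT.le
  set ubar : Fin n → ℝ → ℝ := fun j t => b j - d j * (T - t) with hubar
  have hcont : ∀ j, Continuous (ubar j) := fun j => by simp only [hubar]; fun_prop
  have hsum_cont : Continuous (fun s => ∑ j, ubar j s) :=
    continuous_finsetSum _ fun j _ => hcont j
  set h : ℝ → ℝ := fun t => v t - ubar i t with hh
  have hhi : IntervalIntegrable h volume t0 T := hvi.sub ((hcont i).intervalIntegrable _ _)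
  have hh2 : IntervalIntegrable (fun t => (h t)^2) volume t0 T := by
    have h1 : IntervalIntegrable (fun t => (v t)^2 - 2 * ubar i t * v t + (ubar i t)^2)
        volume t0 T :=
      (hv2.sub (hvi.continuousOn_mul ((hcont i).const_mul 2).continuousOn)).add
        (((hcont i).pow 2).intervalIntegrable _ _)
    refine h1.congr fun t _ => ?_
    simp only [hh]
    ring
  have hHi : IntervalIntegrable (fun t => ∫ s in t0..t, h s) volume t0 T :=
    (hhi.absolutelyContinuousOnInterval_intervalIntegral
      (by simp)).continuousOn.intervalIntegrable
  have hlin : IntervalIntegrable (fun t => (T - t) * h t) volume t0 T :=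
    hhi.continuousOn_mul (by fun_prop)
  have hbase : IntervalIntegrable
      (fun t => b i * ubar i t - (1/2) * (ubar i t)^2 - d i * state x0 t0 ubar t)
      volume t0 T := by
    have hst : Continuous (state x0 t0 ubar) :=
      continuous_const.add
        (intervalIntegral.continuous_primitive (fun a c => hsum_cont.intervalIntegrable a c) t0)
    have hci := hcont i
    apply Continuous.intervalIntegrable
    fun_prop
  have hsum : ∀ s, ∑ j, Function.update ubar i v j s = (∑ j, ubar j s) + h s := by
    intro s
    have e : ∀ j, Function.update ubar i v j s = ubar j s + if j = i then h s else 0 := by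
      intro j
      by_cases hj : j = i
      · subst hj; simp [hh]
      · simp [hj]
    simp [e, Finset.sum_add_distrib]
  have hstate : ∀ t ∈ Set.uIcc t0 T, state x0 t0 (Function.update ubar i v) t
      = state x0 t0 ubar t + ∫ s in t0..t, h s := by
    intro t ht
    have hht : IntervalIntegrable h volume t0 t :=
      hhi.mono_set (Set.uIcc_subset_uIcc_left ht)
    simp only [state, hsum]
    rw [intervalIntegral.integral_add (hsum_cont.intervalIntegrable _ _) hht, add_assoc]
  have hpay : payoff b d x0 t0 T i (Function.update ubar i v)
      = ∫ t in t0..T,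
          ((b i * ubar i t - (1/2) * (ubar i t)^2 - d i * state x0 t0 ubar t)
            + (d i * ((T - t) * h t - ∫ s in t0..t, h s) - (1/2) * (h t)^2)) := by
    unfold payoff
    refine intervalIntegral.integral_congr fun t ht => ?_
    have hht : h t = v t - ubar i t := rfl
    have hut : ubar i t = b i - d i * (T - t) := rfl
    simp only [hstate t ht, Function.update_self]
    rw [hht, hut]
    ring
  rw [hpay, intervalIntegral.integral_add hbase
      (((hlin.sub hHi).const_mul _).sub (hh2.const_mul _)),
    intervalIntegral.integral_sub ((hlin.sub hHi).const_mul _) (hh2.const_mul _),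
    intervalIntegral.integral_const_mul, intervalIntegral.integral_const_mul,
    intervalIntegral.integral_sub hlin hHi, integral_primitive_eq hhi]
  have hnn : 0 ≤ ∫ t in t0..T, (h t)^2 :=
    intervalIntegral.integral_nonneg htT.le fun t _ => sq_nonneg _
  unfold payoff
  linarith
end

section
/- In the pollution control game, let x^{NE} be the state trajectory generated by the Nash controls ū i (t) = b i − d i·(T − t) and x* the state trajectory generated by the cooperative controls u* i (t) = b i − D_N·(T − t), where D_N = Σ_j d j. Then for every t ∈ [t0, T], x^{NE}(t) − x*(t) = (1/2)·(n − 1)·D_N·(t − t0)·(2T − t − t0), and in particular x^{NE}(t) ≥ x*(t). -/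
/-!
The controls in both profiles are affine in time, so each state trajectory has an explicit
quadratic form (`state_affine`). The intercepts `b j` cancel in the difference; the total slopes
are `D_N = ∑ k, d k` for Nash and `n * D_N` for cooperation, which leaves the factor
`(n - 1) * D_N`. Every factor of the resulting product is nonnegative for `t0 ≤ t ≤ T`.
-/

open scoped BigOperators
open MeasureTheory intervalIntegral

/-- Closed form of the state when every control is affine in time. Both the Nash and the
cooperative profile have this shape, with `e = d` and `e` constantly `∑ k, d k`. -/
lemma state_affine {n : ℕ} (c e : Fin n → ℝ) (x0 t0 T t : ℝ) :
    state x0 t0 (fun j s => c j - e j * (T - s)) t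
      = x0 + (∑ j, c j) * (t - t0) - (1/2) * (∑ j, e j) * (t - t0) * (2 * T - t - t0) := by
  have h : ∀ s, (∑ j, (c j - e j * (T - s)))
      = ((∑ j, c j) - (∑ j, e j) * T) + (∑ j, e j) * s := by
    intro s
    rw [Finset.sum_sub_distrib, ← Finset.sum_mul]
    ring
  simp only [state, h]
  rw [intervalIntegral.integral_add
    (Continuous.intervalIntegrable (by fun_prop) _ _)
    (Continuous.intervalIntegrable (by fun_prop) _ _),
    intervalIntegral.integral_const, intervalIntegral.integral_const_mul, integral_id,
    smul_eq_mul]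
  ring

/-- Comparison of the Nash and cooperative state trajectories: for every `t ∈ [t0, T]`,
`x^{NE}(t) − x*(t) = (1/2)(n−1) D_N (t−t0)(2T−t−t0)`, and in particular
`x^{NE}(t) ≥ x*(t)`. -/
theorem pollution_state_comparison (n : ℕ) (hn : 1 ≤ n) (b d : Fin n → ℝ)
    (hd : ∀ i, 0 < d i) (x0 t0 T : ℝ) (htT : t0 < T)
    (hreg : ∀ i, (∑ j, d j) * (T - t0) ≤ b i) :
    ∀ t ∈ Set.Icc t0 T,
      state x0 t0 (fun j s => b j - d j * (T - s)) t
          - state x0 t0 (fun j s => b j - (∑ k, d k) * (T - s)) t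
        = (1/2) * ((n : ℝ) - 1) * (∑ k, d k) * (t - t0) * (2 * T - t - t0)
      ∧ state x0 t0 (fun j s => b j - (∑ k, d k) * (T - s)) t
          ≤ state x0 t0 (fun j s => b j - d j * (T - s)) t := by
  intro t ht
  have key : state x0 t0 (fun j s => b j - d j * (T - s)) t
          - state x0 t0 (fun j s => b j - (∑ k, d k) * (T - s)) t
        = (1/2) * ((n : ℝ) - 1) * (∑ k, d k) * (t - t0) * (2 * T - t - t0) := by
    rw [state_affine b d, state_affine b (fun _ => ∑ k, d k)]
    simp only [Finset.sum_const, Finset.card_univ, Fintype.card_fin, nsmul_eq_mul]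
    ring
  refine ⟨key, sub_nonneg.mp ?_⟩
  rw [key]
  have h1 : (0 : ℝ) ≤ (n : ℝ) - 1 := sub_nonneg.mpr (by exact_mod_cast hn)
  have h2 : 0 ≤ ∑ k, d k := Finset.sum_nonneg fun i _ => (hd i).le
  have h3 : 0 ≤ t - t0 := sub_nonneg.mpr ht.1
  have h4 : 0 ≤ 2 * T - t - t0 := by linarith [ht.2]
  positivity
end

section
/- Key cancellation identity for Shapley values: let n ≥ 1 and d : Fin n → ℝ, and for S : Finset (Fin n) write D_S = Σ_{j∈S} d j, D_N = Σ_j d j. Then for every player i : Fin n, Σ over coalitions S ⊆ Fin n with i ∈ S of ((n − S.card)! · (S.card − 1)! / n!) · (2·(D_N − D_S)·D_S − 2·(D_N − D_S + d i)·(D_S − d i)) = 0. -/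
open scoped BigOperators

/-!
The map `S ↦ insert i Sᶜ` is an involution on the coalitions containing `i`. It sends the size
`s` to `n - s + 1`, so it swaps the two factorials in the Shapley weight, and it sends `D_S` to
`D_N - D_S + d i`, so it swaps the two products in the bracket. Each summand is therefore sent to
its negative, and the sum equals its own negative.
-/

/-- Key cancellation identity used in the computation of Shapley values for the
pollution control game: for every player `i`, the Shapley-weighted sum over all
coalitions containing `i` of the expression
`2 (D_N − D_S) D_S − 2 (D_N − D_S + d i)(D_S − d i)` vanishes. -/
theorem shapley_cancellation (n : ℕ) (hn : 1 ≤ n) (d : Fin n → ℝ) (i : Fin n) :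
    ∑ S ∈ Finset.univ.filter (fun S : Finset (Fin n) => i ∈ S),
      ((Nat.factorial (n - S.card) * Nat.factorial (S.card - 1) : ℝ) / Nat.factorial n)
        * (2 * ((∑ j, d j) - (∑ j ∈ S, d j)) * (∑ j ∈ S, d j)
            - 2 * ((∑ j, d j) - (∑ j ∈ S, d j) + d i) * ((∑ j ∈ S, d j) - d i))
      = 0 := by
  have hcard : ∀ S : Finset (Fin n), i ∈ S → (insert i Sᶜ).card = n - S.card + 1 := by
    intro S hS
    rw [Finset.card_insert_of_notMem (by simpa using hS), Finset.card_compl, Fintype.card_fin]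
  have hsum : ∀ S : Finset (Fin n), i ∈ S →
      ∑ j ∈ insert i Sᶜ, d j = (∑ j, d j) - (∑ j ∈ S, d j) + d i := by
    intro S hS
    rw [Finset.sum_insert (by simpa using hS), ← Finset.sum_add_sum_compl S d]
    ring
  have hinv : ∀ S : Finset (Fin n), i ∈ S → insert i (insert i Sᶜ)ᶜ = S := by
    intro S hS
    ext j
    by_cases hj : j = i <;> simp [hj, hS]
  rw [← self_eq_neg, ← Finset.sum_neg_distrib]
  refine Finset.sum_nbij' (fun S => insert i Sᶜ) (fun S => insert i Sᶜ)
    (by simp) (by simp) (fun S hS => hinv S (by simpa using hS))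
    (fun S hS => hinv S (by simpa using hS)) ?_
  intro S hS
  replace hS : i ∈ S := by simpa using hS
  have hpos : 1 ≤ S.card := Finset.card_pos.mpr ⟨i, hS⟩
  have hle : S.card ≤ n := by simpa using S.card_le_univ
  rw [hsum S hS, hcard S hS, Nat.add_sub_cancel,
    show n - (n - S.card + 1) = S.card - 1 by omega]
  ring
end
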